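/- Let M ≥ 2, let μ̂_j = A_j y + b_j (j = 1,…,M) be affine estimators with ‖A_j‖_op ≤ 1, with noise ξ ~ N(0, σ² I_n), and let π = (π_1,…,π_M) be a probability vector in the simplex Λ^M. Let θ̂_π be any minimizer over Λ^M of V(θ) = H_pen(θ) + 46σ² Σ_{j=1}^M θ_j log(1/π_j). Then for every x > 0, with probability at least 1 − 2exp(−x), ‖μ̂_{θ̂_π} − f‖² ≤ min_{j=1,…,M} ( ‖μ̂_j − f‖² + 92σ² log(1/π_j) ) + 46σ² x. -/

import Mathlib

open MeasureTheory ProbabilityTheory Finset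

noncomputable section

/-- Squared Euclidean norm on `Fin n → ℝ`. -/
def sqNorm {n : ℕ} (v : Fin n → ℝ) : ℝ := ∑ i, (v i) ^ 2

/-- The simplex `Λ^M` of probability vectors in `ℝ^M`. -/
def simplex (M : ℕ) : Set (Fin M → ℝ) := {θ | (∀ j, 0 ≤ θ j) ∧ ∑ j, θ j = 1}

/-- Operator norm (ℓ²→ℓ²) of a square matrix. -/
def opNorm {n : ℕ} (A : Matrix (Fin n) (Fin n) ℝ) : ℝ :=
  sSup {c | ∃ x : Fin n → ℝ, sqNorm x ≤ 1 ∧ c = Real.sqrt (sqNorm (A.mulVec x))}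

/-- The distribution of a vector with i.i.d. `N(0,σ²)` coordinates. -/
def gaussPi (n : ℕ) (σ : ℝ) : Measure (Fin n → ℝ) :=
  Measure.pi fun _ => gaussianReal 0 ⟨σ ^ 2, sq_nonneg σ⟩

/-- The aggregated affine estimator `μ̂_θ = A_θ y + b_θ = ∑_j θ_j (A_j y + b_j)`. -/
def muV {n M : ℕ} (A : Fin M → Matrix (Fin n) (Fin n) ℝ) (b : Fin M → Fin n → ℝ)
    (y : Fin n → ℝ) (θ : Fin M → ℝ) : Fin n → ℝ :=
  ∑ j, θ j • ((A j).mulVec y + b j)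

/-- Mallows' `C_p` criterion. -/
def Cp {n M : ℕ} (A : Fin M → Matrix (Fin n) (Fin n) ℝ) (b : Fin M → Fin n → ℝ)
    (σ : ℝ) (y : Fin n → ℝ) (θ : Fin M → ℝ) : ℝ :=
  sqNorm (muV A b y θ) - 2 * ∑ i, y i * muV A b y θ i
    + 2 * σ ^ 2 * ∑ j, θ j * (A j).trace

/-- The penalty `pen(θ) = ∑_j θ_j ‖μ̂_θ - μ̂_j‖²`. -/
def pen {n M : ℕ} (A : Fin M → Matrix (Fin n) (Fin n) ℝ) (b : Fin M → Fin n → ℝ)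
    (y : Fin n → ℝ) (θ : Fin M → ℝ) : ℝ :=
  ∑ j, θ j * sqNorm (muV A b y θ - ((A j).mulVec y + b j))

/-- The penalized criterion `H_pen(θ) = C_p(θ) + pen(θ)/2`. -/
def Hpen {n M : ℕ} (A : Fin M → Matrix (Fin n) (Fin n) ℝ) (b : Fin M → Fin n → ℝ)
    (σ : ℝ) (y : Fin n → ℝ) (θ : Fin M → ℝ) : ℝ :=
  Cp A b σ y θ + pen A b y θ / 2

/-!
Write `m_j = A_j y + b_j` and `m_θ = ∑ θ_j m_j`. On the simplex the criterion is `‖m_θ‖² / 2` plus a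
linear function of `θ`, so it exceeds its minimum at `θ̂` by at least `‖m_θ̂ - m_θ‖² / 2`. Compared
with the vertex `m_k`, this gain and the penalty add up, by the bias-variance identity, to
`∑ θ̂_j ‖m_j - m_k‖² / 2`. Hence `‖m_θ̂ - f‖² - ‖m_k - f‖²` is at most a `θ̂`-average of the
pairwise quantities `2⟨ξ, m_j - m_k⟩ - 2σ² Tr(A_j - A_k) - ‖m_j - m_k‖² / 2`, corrected by the
prior costs. Each of them is a quadratic polynomial in the Gaussian noise; diagonalizing it bounds
its exponential moment of order `1 / (36σ²)` by `1`, because the negative square absorbs the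
variance. Chernoff's bound and a union bound over pairs with weights `π_j π_k` conclude.
-/

section GaussianQuadraticForms

open scoped RealInnerProductSpace

/-- The standard Gaussian distribution on `ι → ℝ`: independent `N(0, 1)` coordinates. -/
abbrev stdGaussianPi (ι : Type*) [Fintype ι] : Measure (ι → ℝ) :=
  Measure.pi fun _ => gaussianReal 0 1

lemma gaussianPDFReal_mul_exp_quadratic {a : ℝ} (ha : a < 1 / 2) (w x : ℝ) :
    gaussianPDFReal 0 1 x * Real.exp (a * x ^ 2 + w * x) =
      (√(1 - 2 * a))⁻¹ * Real.exp (w ^ 2 / (2 * (1 - 2 * a))) *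
        gaussianPDFReal (w / (1 - 2 * a)) (1 - 2 * a).toNNReal⁻¹ x := by
  have hpos : 0 < 1 - 2 * a := by linarith
  have hsqrt : √(2 * Real.pi * (1 - 2 * a)⁻¹) = √(2 * Real.pi) * (√(1 - 2 * a))⁻¹ := by
    rw [Real.sqrt_mul (by positivity), Real.sqrt_inv]
  have hexponent : -(x - 0) ^ 2 / (2 * 1) + (a * x ^ 2 + w * x) =
      w ^ 2 / (2 * (1 - 2 * a)) + -(x - w / (1 - 2 * a)) ^ 2 / (2 * (1 - 2 * a)⁻¹) := by
    field_simp
    ring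
  simp only [gaussianPDFReal, NNReal.coe_one, NNReal.coe_inv, Real.coe_toNNReal _ hpos.le, hsqrt,
    mul_one]
  rw [mul_assoc, ← Real.exp_add, ← mul_one (2 : ℝ), hexponent, Real.exp_add]
  have : 0 < √(1 - 2 * a) := Real.sqrt_pos.2 hpos
  field_simp

lemma lintegral_exp_quadratic_gaussianReal {a : ℝ} (ha : a < 1 / 2) (w : ℝ) :
    ∫⁻ x, ENNReal.ofReal (Real.exp (a * x ^ 2 + w * x)) ∂gaussianReal 0 1 =
      ENNReal.ofReal ((√(1 - 2 * a))⁻¹ * Real.exp (w ^ 2 / (2 * (1 - 2 * a)))) := by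
  have hvar : (1 - 2 * a).toNNReal⁻¹ ≠ 0 := inv_ne_zero (Real.toNNReal_pos.2 (by linarith)).ne'
  rw [gaussianReal_of_var_ne_zero _ one_ne_zero,
    lintegral_withDensity_eq_lintegral_mul _ (measurable_gaussianPDF _ _) (by fun_prop)]
  simp only [Pi.mul_apply, gaussianPDF, ← ENNReal.ofReal_mul (gaussianPDFReal_nonneg _ _ _),
    gaussianPDFReal_mul_exp_quadratic ha]
  simp only [ENNReal.ofReal_mul (show 0 ≤ (√(1 - 2 * a))⁻¹ *
    Real.exp (w ^ 2 / (2 * (1 - 2 * a))) by positivity)]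
  rw [lintegral_const_mul _ (by fun_prop)]
  exact (congrArg _ (lintegral_gaussianPDF_eq_one _ hvar)).trans (mul_one _)

lemma one_le_exp_add_sq_mul_one_sub {u : ℝ} (hu : u ≤ 1 / 2) :
    1 ≤ Real.exp (u + u ^ 2) * (1 - u) := by
  have hsub : 0 ≤ 1 - u := by linarith
  rcases le_total 0 u with hnonneg | hnonpos
  · have htail : 0 ≤ 1 - u - u ^ 2 - u ^ 3 := by nlinarith [pow_le_pow_left₀ hnonneg hu 3]
    calc 1 ≤ 1 + u ^ 2 / 2 * (1 - u - u ^ 2 - u ^ 3) := le_add_of_nonneg_right (by positivity)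
      _ = (1 + (u + u ^ 2) + (u + u ^ 2) ^ 2 / 2) * (1 - u) := by ring
      _ ≤ Real.exp (u + u ^ 2) * (1 - u) :=
          mul_le_mul_of_nonneg_right (Real.quadratic_le_exp_of_nonneg (by positivity)) hsub
  · calc 1 ≤ 1 + u ^ 2 * -u :=
          le_add_of_nonneg_right (mul_nonneg (sq_nonneg u) (neg_nonneg.2 hnonpos))
      _ = (u + u ^ 2 + 1) * (1 - u) := by ring
      _ ≤ Real.exp (u + u ^ 2) * (1 - u) :=
          mul_le_mul_of_nonneg_right (Real.add_one_le_exp _) hsub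

lemma lintegral_exp_quadratic_gaussianReal_le {a : ℝ} (ha : a ≤ 1 / 4) (w : ℝ) :
    ∫⁻ x, ENNReal.ofReal (Real.exp (a * x ^ 2 + w * x)) ∂gaussianReal 0 1 ≤
      ENNReal.ofReal (Real.exp (a + 2 * a ^ 2 + w ^ 2)) := by
  have hpos : 0 < 1 - 2 * a := by linarith
  have hsqrt : (√(1 - 2 * a))⁻¹ ≤ Real.exp (a + 2 * a ^ 2) := by
    rw [← Real.sqrt_inv, Real.sqrt_le_left (Real.exp_pos _).le, ← Real.exp_nat_mul,
      inv_le_iff_one_le_mul₀ hpos]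
    rw [show ((2 : ℕ) : ℝ) * (a + 2 * a ^ 2) = 2 * a + (2 * a) ^ 2 by push_cast; ring]
    exact one_le_exp_add_sq_mul_one_sub (by linarith)
  have hexponent : w ^ 2 / (2 * (1 - 2 * a)) ≤ w ^ 2 :=
    div_le_self (sq_nonneg w) (by linarith)
  rw [lintegral_exp_quadratic_gaussianReal (by linarith), Real.exp_add]
  gcongr

variable {ι : Type*} [Fintype ι]

lemma lintegral_prod_stdGaussianPi {F : ι → ℝ → ENNReal} (hF : ∀ i, Measurable (F i)) :
    ∫⁻ g, ∏ i, F i (g i) ∂stdGaussianPi ι = ∏ i, ∫⁻ x, F i x ∂gaussianReal 0 1 := by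
  have hindep : iIndepFun (fun i (g : ι → ℝ) => F i (g i)) (stdGaussianPi ι) :=
    iIndepFun_pi fun i => (hF i).aemeasurable
  rw [lintegral_prod_eq_prod_lintegral_of_indepFun _ _ hindep
    fun i => (hF i).comp (measurable_pi_apply i)]
  exact Finset.prod_congr rfl fun i _ =>
    (measurePreserving_eval (fun _ : ι => gaussianReal 0 1) i).lintegral_comp (hF i)

lemma lintegral_exp_sum_quadratic_le {d : ι → ℝ} (hd : ∀ i, d i ≤ 1 / 4) (w : ι → ℝ) :
    ∫⁻ g, ENNReal.ofReal (Real.exp (∑ i, (d i * g i ^ 2 + w i * g i))) ∂stdGaussianPi ι ≤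
      ENNReal.ofReal (Real.exp (∑ i, (d i + 2 * d i ^ 2 + w i ^ 2))) := by
  simp only [Real.exp_sum, ENNReal.ofReal_prod_of_nonneg fun _ _ => (Real.exp_pos _).le]
  rw [lintegral_prod_stdGaussianPi
    (F := fun i x => ENNReal.ofReal (Real.exp (d i * x ^ 2 + w i * x))) fun i => by fun_prop]
  exact Finset.prod_le_prod' fun i _ => lintegral_exp_quadratic_gaussianReal_le (hd i) _

variable {E : Type*} [NormedAddCommGroup E] [InnerProductSpace ℝ E] [FiniteDimensional ℝ E]

lemma trace_comp_self_eq_sum_eigenvalues_sq {T : E →ₗ[ℝ] E} (hT : T.IsSymmetric) {n : ℕ}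
    (hn : Module.finrank ℝ E = n) :
    LinearMap.trace ℝ E (T ∘ₗ T) = ∑ i, hT.eigenvalues hn i ^ 2 := by
  rw [LinearMap.trace_eq_sum_inner _ (hT.eigenvectorBasis hn)]
  refine Finset.sum_congr rfl fun i _ => ?_
  simp [hT.apply_eigenvectorBasis, inner_smul_right, sq]

lemma eigenvalues_le_of_inner_le {T : E →ₗ[ℝ] E} (hT : T.IsSymmetric) {n : ℕ}
    (hn : Module.finrank ℝ E = n) {r : ℝ} (hr : ∀ x, ⟪x, T x⟫ ≤ r * ‖x‖ ^ 2) (i : Fin n) :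
    hT.eigenvalues hn i ≤ r := by
  simpa [hT.apply_eigenvectorBasis, inner_smul_right] using hr (hT.eigenvectorBasis hn i)

lemma inner_apply_eigenvector_sum {T : E →ₗ[ℝ] E} (hT : T.IsSymmetric) {n : ℕ}
    (hn : Module.finrank ℝ E = n) (g : Fin n → ℝ) :
    ⟪∑ i, g i • hT.eigenvectorBasis hn i, T (∑ i, g i • hT.eigenvectorBasis hn i)⟫ =
      ∑ i, hT.eigenvalues hn i * g i ^ 2 := by
  simp only [map_sum, map_smul, hT.apply_eigenvectorBasis, RCLike.ofReal_real_eq_id, id_eq,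
    smul_smul]
  rw [(hT.eigenvectorBasis hn).orthonormal.inner_sum]
  refine Finset.sum_congr rfl fun i _ => ?_
  simp only [conj_trivial]
  ring

variable [MeasurableSpace E] [BorelSpace E]

theorem lintegral_exp_inner_quadratic_stdGaussian_le {T : E →ₗ[ℝ] E} (hT : T.IsSymmetric)
    (hT_le : ∀ x, ⟪x, T x⟫ ≤ 1 / 4 * ‖x‖ ^ 2) (v : E) :
    ∫⁻ x, ENNReal.ofReal (Real.exp (⟪x, T x⟫ + ⟪v, x⟫)) ∂stdGaussian E ≤
      ENNReal.ofReal (Real.exp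
        (LinearMap.trace ℝ E T + 2 * LinearMap.trace ℝ E (T ∘ₗ T) + ‖v‖ ^ 2)) := by
  let e := hT.eigenvectorBasis rfl
  let d := hT.eigenvalues rfl
  have hdiag (g : Fin (Module.finrank ℝ E) → ℝ) :
      ⟪∑ i, g i • e i, T (∑ i, g i • e i)⟫ + ⟪v, ∑ i, g i • e i⟫ =
        ∑ i, (d i * g i ^ 2 + ⟪v, e i⟫ * g i) := by
    rw [inner_apply_eigenvector_sum, inner_sum, Finset.sum_add_distrib]
    simp only [inner_smul_right, mul_comm, d, e]
  have hcont : Continuous T := T.continuous_of_finiteDimensional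
  have hinvariants : LinearMap.trace ℝ E T + 2 * LinearMap.trace ℝ E (T ∘ₗ T) + ‖v‖ ^ 2 =
      ∑ i, (d i + 2 * d i ^ 2 + ⟪v, e i⟫ ^ 2) := by
    rw [hT.trace_eq_sum_eigenvalues rfl, trace_comp_self_eq_sum_eigenvalues_sq hT rfl,
      ← e.sum_sq_inner_left v, Finset.sum_add_distrib, Finset.sum_add_distrib, Finset.mul_sum]
    rfl
  rw [stdGaussian_eq_map_pi_orthonormalBasis e, lintegral_map (by fun_prop) (by fun_prop),
    hinvariants]
  simp only [hdiag]
  exact lintegral_exp_sum_quadratic_le (eigenvalues_le_of_inner_le hT rfl hT_le) _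

end GaussianQuadraticForms

section NoiseExcess

open scoped RealInnerProductSpace

variable {E : Type*} [NormedAddCommGroup E] [InnerProductSpace ℝ E]

/-- The amount by which the centred cross term between the noise `g`, of variance `σ²` in every
direction, and the affine estimator difference `B g + c` exceeds half the squared norm of that
difference. -/
def noiseExcess (B : E →ₗ[ℝ] E) (c : E) (σ : ℝ) (g : E) : ℝ :=
  2 * ⟪g, B g + c⟫ - 2 * σ ^ 2 * LinearMap.trace ℝ E B - ‖B g + c‖ ^ 2 / 2

lemma noiseExcess_smul {σ : ℝ} (hσ : σ ≠ 0) (B : E →ₗ[ℝ] E) (c g : E) :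
    noiseExcess B c σ (σ • g) = σ ^ 2 * noiseExcess B (σ⁻¹ • c) 1 g := by
  have hfactor : B (σ • g) + c = σ • (B g + σ⁻¹ • c) := by
    rw [map_smul, smul_add, smul_inv_smul₀ hσ]
  simp only [noiseExcess, hfactor, real_inner_smul_left, real_inner_smul_right, norm_smul, mul_pow,
    Real.norm_eq_abs, sq_abs]
  ring

lemma noiseExcess_zero_nonpos (B : E →ₗ[ℝ] E) (c : E) : noiseExcess B c 0 0 ≤ 0 := by
  simp only [noiseExcess, inner_zero_left]
  linarith [sq_nonneg ‖B 0 + c‖]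

variable [FiniteDimensional ℝ E]

/-- The self-adjoint operator of the quadratic part of `noiseExcess B c σ`. -/
def excessForm (B : E →ₗ[ℝ] E) : E →ₗ[ℝ] E :=
  B + LinearMap.adjoint B - (1 / 2 : ℝ) • (LinearMap.adjoint B ∘ₗ B)

/-- The vector of the linear part of `noiseExcess B c σ`. -/
def excessVector (B : E →ₗ[ℝ] E) (c : E) : E := (2 : ℝ) • c - LinearMap.adjoint B c

lemma isSymmetric_excessForm (B : E →ₗ[ℝ] E) : (excessForm B).IsSymmetric := by
  intro x y
  simp only [excessForm, LinearMap.sub_apply, LinearMap.add_apply, LinearMap.smul_apply,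
    LinearMap.comp_apply, inner_sub_left, inner_sub_right, inner_add_left, inner_add_right,
    real_inner_smul_left, real_inner_smul_right, LinearMap.adjoint_inner_left,
    LinearMap.adjoint_inner_right]
  ring

lemma inner_excessForm_self (B : E →ₗ[ℝ] E) (x : E) :
    ⟪x, excessForm B x⟫ = 2 * ⟪x, B x⟫ - ‖B x‖ ^ 2 / 2 := by
  simp only [excessForm, LinearMap.sub_apply, LinearMap.add_apply, LinearMap.smul_apply,
    LinearMap.comp_apply, inner_sub_right, inner_add_right, real_inner_smul_right,
    LinearMap.adjoint_inner_right, real_inner_self_eq_norm_sq, real_inner_comm x]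
  ring

lemma inner_excessForm_self_le (B : E →ₗ[ℝ] E) (x : E) :
    ⟪x, excessForm B x⟫ ≤ 2 * ‖x‖ ^ 2 := by
  have hsq : ‖B x - (2 : ℝ) • x‖ ^ 2 = ‖B x‖ ^ 2 - 4 * ⟪x, B x⟫ + 4 * ‖x‖ ^ 2 := by
    rw [norm_sub_sq_real, real_inner_smul_right, norm_smul, real_inner_comm, Real.norm_ofNat]
    ring
  rw [inner_excessForm_self]
  linarith [sq_nonneg ‖B x - (2 : ℝ) • x‖]

lemma noiseExcess_eq_inner_excessForm (B : E →ₗ[ℝ] E) (c : E) (σ : ℝ) (g : E) :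
    noiseExcess B c σ g = ⟪g, excessForm B g⟫ + ⟪excessVector B c, g⟫ -
      (2 * σ ^ 2 * LinearMap.trace ℝ E B + ‖c‖ ^ 2 / 2) := by
  rw [inner_excessForm_self, excessVector, inner_sub_left, real_inner_smul_left,
    LinearMap.adjoint_inner_left, noiseExcess, inner_add_right, norm_add_sq_real,
    real_inner_comm (B g) c, real_inner_comm g c]
  ring

lemma trace_adjoint (B : E →ₗ[ℝ] E) :
    LinearMap.trace ℝ E (LinearMap.adjoint B) = LinearMap.trace ℝ E B := by
  simp only [LinearMap.trace_eq_sum_inner _ (stdOrthonormalBasis ℝ E),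
    LinearMap.adjoint_inner_right, real_inner_comm]

lemma trace_adjoint_comp_self_eq_sum_norm_sq {ι : Type*} [Fintype ι] (e : OrthonormalBasis ι ℝ E)
    (B : E →ₗ[ℝ] E) :
    LinearMap.trace ℝ E (LinearMap.adjoint B ∘ₗ B) = ∑ i, ‖B (e i)‖ ^ 2 := by
  simp only [LinearMap.trace_eq_sum_inner _ e, LinearMap.comp_apply, LinearMap.adjoint_inner_right,
    real_inner_self_eq_norm_sq]

lemma trace_excessForm (B : E →ₗ[ℝ] E) :
    LinearMap.trace ℝ E (excessForm B) =
      2 * LinearMap.trace ℝ E B - LinearMap.trace ℝ E (LinearMap.adjoint B ∘ₗ B) / 2 := by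
  simp only [excessForm, map_sub, map_add, map_smul, trace_adjoint, smul_eq_mul]
  ring

lemma norm_adjoint_apply_le {B : E →ₗ[ℝ] E} {r : ℝ} (hr : 0 ≤ r) (hB : ∀ x, ‖B x‖ ≤ r * ‖x‖)
    (x : E) : ‖LinearMap.adjoint B x‖ ≤ r * ‖x‖ := by
  have hsq : ‖LinearMap.adjoint B x‖ * ‖LinearMap.adjoint B x‖ ≤
      r * ‖x‖ * ‖LinearMap.adjoint B x‖ :=
    calc ‖LinearMap.adjoint B x‖ * ‖LinearMap.adjoint B x‖
        = ⟪x, B (LinearMap.adjoint B x)⟫ := by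
          rw [← LinearMap.adjoint_inner_left, real_inner_self_eq_norm_mul_norm]
      _ ≤ ‖x‖ * ‖B (LinearMap.adjoint B x)‖ := real_inner_le_norm _ _
      _ ≤ ‖x‖ * (r * ‖LinearMap.adjoint B x‖) := by gcongr; exact hB _
      _ = r * ‖x‖ * ‖LinearMap.adjoint B x‖ := by ring
  rcases (norm_nonneg (LinearMap.adjoint B x)).eq_or_lt with hzero | hpos
  · rw [← hzero]
    positivity
  · exact le_of_mul_le_mul_right hsq hpos

lemma norm_excessForm_apply_sq_le {B : E →ₗ[ℝ] E} (hB : ∀ x, ‖B x‖ ≤ 2 * ‖x‖) (x : E) :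
    ‖excessForm B x‖ ^ 2 ≤ 6 * ‖B x‖ ^ 2 + 3 * ‖LinearMap.adjoint B x‖ ^ 2 := by
  have hhalf : ‖(1 / 2 : ℝ) • LinearMap.adjoint B (B x)‖ ≤ ‖B x‖ := by
    rw [norm_smul, Real.norm_of_nonneg (by norm_num)]
    linarith [norm_adjoint_apply_le zero_le_two hB (B x)]
  have htriangle : ‖excessForm B x‖ ≤ 2 * ‖B x‖ + ‖LinearMap.adjoint B x‖ :=
    calc ‖excessForm B x‖
        ≤ ‖B x‖ + ‖LinearMap.adjoint B x‖ + ‖(1 / 2 : ℝ) • LinearMap.adjoint B (B x)‖ :=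
          (norm_sub_le _ _).trans (add_le_add_left (norm_add_le _ _) _)
      _ ≤ 2 * ‖B x‖ + ‖LinearMap.adjoint B x‖ := by linarith
  calc ‖excessForm B x‖ ^ 2 ≤ (2 * ‖B x‖ + ‖LinearMap.adjoint B x‖) ^ 2 := by gcongr
    _ ≤ 6 * ‖B x‖ ^ 2 + 3 * ‖LinearMap.adjoint B x‖ ^ 2 := by
        linarith [sq_nonneg (‖B x‖ - ‖LinearMap.adjoint B x‖)]

lemma trace_excessForm_comp_self_le {B : E →ₗ[ℝ] E} (hB : ∀ x, ‖B x‖ ≤ 2 * ‖x‖) :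
    LinearMap.trace ℝ E (excessForm B ∘ₗ excessForm B) ≤
      9 * LinearMap.trace ℝ E (LinearMap.adjoint B ∘ₗ B) := by
  have e := stdOrthonormalBasis ℝ E
  have hself : LinearMap.adjoint (excessForm B) = excessForm B :=
    (isSymmetric_excessForm B).adjoint_eq
  have hadjoint : ∑ i, ‖LinearMap.adjoint B (e i)‖ ^ 2 =
      LinearMap.trace ℝ E (LinearMap.adjoint B ∘ₗ B) := by
    rw [← trace_adjoint_comp_self_eq_sum_norm_sq, LinearMap.adjoint_adjoint]
    exact LinearMap.trace_comp_comm' _ _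
  calc LinearMap.trace ℝ E (excessForm B ∘ₗ excessForm B)
      = ∑ i, ‖excessForm B (e i)‖ ^ 2 := by
        rw [← trace_adjoint_comp_self_eq_sum_norm_sq, hself]
    _ ≤ ∑ i, (6 * ‖B (e i)‖ ^ 2 + 3 * ‖LinearMap.adjoint B (e i)‖ ^ 2) :=
        Finset.sum_le_sum fun i _ => norm_excessForm_apply_sq_le hB (e i)
    _ = 9 * LinearMap.trace ℝ E (LinearMap.adjoint B ∘ₗ B) := by
        rw [Finset.sum_add_distrib, ← Finset.mul_sum, ← Finset.mul_sum, hadjoint,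
          ← trace_adjoint_comp_self_eq_sum_norm_sq]
        ring

lemma norm_excessVector_le {B : E →ₗ[ℝ] E} (hB : ∀ x, ‖B x‖ ≤ 2 * ‖x‖) (c : E) :
    ‖excessVector B c‖ ≤ 4 * ‖c‖ :=
  calc ‖excessVector B c‖ ≤ ‖(2 : ℝ) • c‖ + ‖LinearMap.adjoint B c‖ := norm_sub_le _ _
    _ ≤ 2 * ‖c‖ + 2 * ‖c‖ := by
        gcongr
        · rw [norm_smul, Real.norm_ofNat]
        · exact norm_adjoint_apply_le zero_le_two hB c
    _ = 4 * ‖c‖ := by ring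

lemma excess_log_moment_le {B : E →ₗ[ℝ] E} (hB : ∀ x, ‖B x‖ ≤ 2 * ‖x‖) (c : E) {r : ℝ}
    (hr : 0 ≤ r) (hr_le : r ≤ 1 / 36) :
    r * LinearMap.trace ℝ E (excessForm B) +
        2 * (r ^ 2 * LinearMap.trace ℝ E (excessForm B ∘ₗ excessForm B)) +
        r ^ 2 * ‖excessVector B c‖ ^ 2 ≤
      r * (2 * LinearMap.trace ℝ E B + ‖c‖ ^ 2 / 2) := by
  have hfrobenius : 0 ≤ LinearMap.trace ℝ E (LinearMap.adjoint B ∘ₗ B) := by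
    rw [trace_adjoint_comp_self_eq_sum_norm_sq (stdOrthonormalBasis ℝ E)]
    positivity
  -- With the factor `9` of `trace_excessForm_comp_self_le`, this is what makes
  -- `2 * 9 * r ^ 2 ≤ r / 2`.
  have hsq : r ^ 2 ≤ r / 36 := by nlinarith
  have hvector : ‖excessVector B c‖ ^ 2 ≤ 16 * ‖c‖ ^ 2 := by
    grw [norm_excessVector_le hB c]
    exact (mul_pow _ _ _).trans_le (by norm_num)
  rw [trace_excessForm]
  calc _ ≤ r * (2 * LinearMap.trace ℝ E B - LinearMap.trace ℝ E (LinearMap.adjoint B ∘ₗ B) / 2) +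
        2 * (r / 36 * (9 * LinearMap.trace ℝ E (LinearMap.adjoint B ∘ₗ B))) +
        r / 36 * (16 * ‖c‖ ^ 2) := by
        grw [trace_excessForm_comp_self_le hB, hvector, hsq]
    _ ≤ r * (2 * LinearMap.trace ℝ E B + ‖c‖ ^ 2 / 2) := by
        linarith [mul_nonneg hr (sq_nonneg ‖c‖)]

variable [MeasurableSpace E] [BorelSpace E]

lemma measurable_noiseExcess (B : E →ₗ[ℝ] E) (c : E) (σ : ℝ) :
    Measurable (noiseExcess B c σ) := by
  have hcont : Continuous B := B.continuous_of_finiteDimensional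
  unfold noiseExcess
  fun_prop

lemma lintegral_exp_noiseExcess_le_one {B : E →ₗ[ℝ] E} (hB : ∀ x, ‖B x‖ ≤ 2 * ‖x‖) (c : E)
    {r : ℝ} (hr : 0 ≤ r) (hr_le : r ≤ 1 / 36) :
    ∫⁻ g, ENNReal.ofReal (Real.exp (r * noiseExcess B c 1 g)) ∂stdGaussian E ≤ 1 := by
  let K := r * (2 * LinearMap.trace ℝ E B + ‖c‖ ^ 2 / 2)
  let T := r • excessForm B
  let v := r • excessVector B c
  have hsplit (g : E) : r * noiseExcess B c 1 g = (⟪g, T g⟫ + ⟪v, g⟫) + -K := by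
    simp only [noiseExcess_eq_inner_excessForm, T, v, K, LinearMap.smul_apply,
      real_inner_smul_left, real_inner_smul_right]
    ring
  have hT_le (x : E) : ⟪x, T x⟫ ≤ 1 / 4 * ‖x‖ ^ 2 := by
    simp only [T, LinearMap.smul_apply, real_inner_smul_right]
    grw [inner_excessForm_self_le, hr_le]
    linarith [sq_nonneg ‖x‖]
  have hlog : LinearMap.trace ℝ E T + 2 * LinearMap.trace ℝ E (T ∘ₗ T) + ‖v‖ ^ 2 ≤ K := by
    have hbound := excess_log_moment_le hB c hr hr_le
    simp only [T, v, LinearMap.smul_comp, LinearMap.comp_smul, map_smul, smul_eq_mul, norm_smul,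
      mul_pow, Real.norm_eq_abs, sq_abs, ← mul_assoc, ← sq]
    simpa only [← mul_assoc] using hbound
  have hsymm : T.IsSymmetric := (isSymmetric_excessForm B).smul (conj_trivial r)
  simp only [hsplit, Real.exp_add _ (-K), ENNReal.ofReal_mul (Real.exp_pos _).le]
  rw [lintegral_mul_const' _ _ ENNReal.ofReal_ne_top]
  grw [lintegral_exp_inner_quadratic_stdGaussian_le hsymm hT_le v,
    ← ENNReal.ofReal_mul (Real.exp_pos _).le, ← Real.exp_add, hlog]
  simp

lemma stdGaussian_noiseExcess_gt_le {B : E →ₗ[ℝ] E} (hB : ∀ x, ‖B x‖ ≤ 2 * ‖x‖) (c : E)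
    {β : ℝ} (hβ : 36 ≤ β) (t : ℝ) :
    stdGaussian E {g | β * t < noiseExcess B c 1 g} ≤ ENNReal.ofReal (Real.exp (-t)) := by
  have hβpos : 0 < β := by linarith
  have hmoment := lintegral_exp_noiseExcess_le_one hB c (r := β⁻¹) (by positivity)
    (by rw [one_div]; gcongr)
  have hmeas := measurable_noiseExcess B c 1
  have hsubset : {g | β * t < noiseExcess B c 1 g} ⊆
      {g | ENNReal.ofReal (Real.exp t) ≤
        ENNReal.ofReal (Real.exp (β⁻¹ * noiseExcess B c 1 g))} := by
    intro g hg
    refine ENNReal.ofReal_le_ofReal (Real.exp_le_exp.2 ?_)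
    rw [inv_mul_eq_div, le_div_iff₀' hβpos]
    exact hg.le
  calc stdGaussian E {g | β * t < noiseExcess B c 1 g}
      ≤ (∫⁻ g, ENNReal.ofReal (Real.exp (β⁻¹ * noiseExcess B c 1 g)) ∂stdGaussian E) /
          ENNReal.ofReal (Real.exp t) :=
        (measure_mono hsubset).trans (meas_ge_le_lintegral_div (by fun_prop)
          (ENNReal.ofReal_pos.2 (Real.exp_pos t)).ne' ENNReal.ofReal_ne_top)
    _ ≤ 1 / ENNReal.ofReal (Real.exp t) := by gcongr
    _ = ENNReal.ofReal (Real.exp (-t)) := by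
        rw [one_div, ← ENNReal.ofReal_inv_of_pos (Real.exp_pos t), Real.exp_neg]

/-- The centred Gaussian distribution on `E` with variance `σ²` in every direction. -/
def isotropicGaussian (E : Type*) [NormedAddCommGroup E] [InnerProductSpace ℝ E]
    [FiniteDimensional ℝ E] [MeasurableSpace E] [BorelSpace E] (σ : ℝ) : Measure E :=
  (stdGaussian E).map (σ • ·)

instance isProbabilityMeasure_isotropicGaussian (σ : ℝ) :
    IsProbabilityMeasure (isotropicGaussian E σ) :=
  Measure.isProbabilityMeasure_map (measurable_const_smul σ).aemeasurable

lemma isotropicGaussian_noiseExcess_gt_le {B : E →ₗ[ℝ] E} (hB : ∀ x, ‖B x‖ ≤ 2 * ‖x‖) (c : E)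
    (σ : ℝ) {β : ℝ} (hβ : 36 ≤ β) (t : ℝ) :
    isotropicGaussian E σ {g | β * σ ^ 2 * t < noiseExcess B c σ g} ≤
      ENNReal.ofReal (Real.exp (-t)) := by
  rw [isotropicGaussian, Measure.map_apply (measurable_const_smul σ)
    (measurableSet_lt measurable_const (measurable_noiseExcess B c σ))]
  rcases eq_or_ne σ 0 with rfl | hσ
  · have hempty : (fun g : E => (0 : ℝ) • g) ⁻¹'
        {g | β * 0 ^ 2 * t < noiseExcess B c 0 g} = ∅ := by
      ext g
      simpa using noiseExcess_zero_nonpos B c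
    rw [hempty, measure_empty]
    exact zero_le
  · convert stdGaussian_noiseExcess_gt_le hB (σ⁻¹ • c) hβ t using 2
    ext g
    have hσsq : 0 < σ ^ 2 := by positivity
    rw [Set.mem_preimage, Set.mem_ofPred_eq, Set.mem_ofPred_eq, noiseExcess_smul hσ,
      show β * σ ^ 2 * t = σ ^ 2 * (β * t) by ring, mul_lt_mul_iff_right₀ hσsq]

end NoiseExcess

section QAggregation

open scoped RealInnerProductSpace

lemma add_le_of_forall_le_segment {p q d : ℝ}
    (h : ∀ t ∈ Set.Ioc (0 : ℝ) 1, p ≤ (1 - t) * p + t * q - t * (1 - t) * d) : p + d ≤ q := by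
  have hdiv (t : ℝ) (ht : t ∈ Set.Ioc (0 : ℝ) 1) : p + (1 - t) * d ≤ q := by
    refine le_of_mul_le_mul_left ?_ ht.1
    linarith [h t ht]
  have hlim : Filter.Tendsto (fun t : ℝ => p + (1 - t) * d) (nhdsWithin 0 (Set.Ioi 0))
      (nhds (p + d)) := by
    have hcont : Continuous fun t : ℝ => p + (1 - t) * d := by fun_prop
    simpa using (hcont.tendsto 0).mono_left nhdsWithin_le_nhds
  refine le_of_tendsto hlim ?_
  filter_upwards [Ioc_mem_nhdsGT (zero_lt_one' ℝ)] with t ht using hdiv t ht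

variable {E : Type*} [NormedAddCommGroup E] [InnerProductSpace ℝ E] {κ : Type*} [Fintype κ]
  (m : κ → E) (y : E) (a : κ → ℝ)

/-- The Q-aggregation criterion: the least-squares risk of the mixture `∑ j, θ j • m j` on the data
`y`, plus linear costs `a`, plus half the dispersion of the `m j` around the mixture. -/
def qAggregationCriterion (θ : κ → ℝ) : ℝ :=
  ‖∑ j, θ j • m j‖ ^ 2 - 2 * ⟪y, ∑ j, θ j • m j⟫ + ∑ j, θ j * a j +
    (∑ j, θ j * ‖∑ i, θ i • m i - m j‖ ^ 2) / 2

variable {m y a} {θ : κ → ℝ}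

lemma sum_mul_norm_sub_sq (hθ : ∑ j, θ j = 1) (u : E) :
    ∑ j, θ j * ‖m j - u‖ ^ 2 =
      ∑ j, θ j * ‖m j‖ ^ 2 - 2 * ⟪∑ j, θ j • m j, u⟫ + ‖u‖ ^ 2 := by
  have hterm (j : κ) : θ j * ‖m j - u‖ ^ 2 =
      θ j * ‖m j‖ ^ 2 - 2 * ⟪θ j • m j, u⟫ + θ j * ‖u‖ ^ 2 := by
    rw [norm_sub_sq_real, real_inner_smul_left]
    ring
  simp only [hterm, Finset.sum_add_distrib, Finset.sum_sub_distrib, ← Finset.mul_sum,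
    ← Finset.sum_mul, hθ, one_mul, sum_inner]

lemma sum_mul_norm_sub_sq_eq_dispersion_add (hθ : ∑ j, θ j = 1) (u : E) :
    ∑ j, θ j * ‖m j - u‖ ^ 2 =
      ∑ j, θ j * ‖∑ i, θ i • m i - m j‖ ^ 2 + ‖∑ j, θ j • m j - u‖ ^ 2 := by
  simp only [norm_sub_rev _ (m _)]
  rw [sum_mul_norm_sub_sq hθ, sum_mul_norm_sub_sq hθ, norm_sub_sq_real,
    real_inner_self_eq_norm_sq]
  ring

lemma qAggregationCriterion_eq (hθ : ∑ j, θ j = 1) :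
    qAggregationCriterion m y a θ = ‖∑ j, θ j • m j‖ ^ 2 / 2 +
      ∑ j, θ j * (‖m j‖ ^ 2 / 2 - 2 * ⟪y, m j⟫ + a j) := by
  have hterm (j : κ) : θ j * (‖m j‖ ^ 2 / 2 - 2 * ⟪y, m j⟫ + a j) =
      θ j * ‖m j‖ ^ 2 / 2 - 2 * ⟪y, θ j • m j⟫ + θ j * a j := by
    rw [real_inner_smul_right]
    ring
  simp only [qAggregationCriterion, norm_sub_rev _ (m _), sum_mul_norm_sub_sq hθ, hterm,
    Finset.sum_add_distrib, Finset.sum_sub_distrib, ← Finset.mul_sum, ← Finset.sum_div, ← inner_sum,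
    real_inner_self_eq_norm_sq]
  ring

lemma qAggregationCriterion_segment {θ' : κ → ℝ} (hθ : ∑ j, θ j = 1) (hθ' : ∑ j, θ' j = 1)
    (t : ℝ) :
    qAggregationCriterion m y a ((1 - t) • θ + t • θ') =
      (1 - t) * qAggregationCriterion m y a θ + t * qAggregationCriterion m y a θ' -
        t * (1 - t) * (‖∑ j, θ j • m j - ∑ j, θ' j • m j‖ ^ 2 / 2) := by
  have hsum : ∑ j, ((1 - t) • θ + t • θ') j = 1 := by
    simp [Finset.sum_add_distrib, ← Finset.mul_sum, hθ, hθ']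
  have hmix : ∑ j, ((1 - t) • θ + t • θ') j • m j =
      (1 - t) • ∑ j, θ j • m j + t • ∑ j, θ' j • m j := by
    simp [add_smul, mul_smul, Finset.sum_add_distrib, Finset.smul_sum]
  have hlinear (l : κ → ℝ) : ∑ j, ((1 - t) • θ + t • θ') j * l j =
      (1 - t) * ∑ j, θ j * l j + t * ∑ j, θ' j * l j := by
    simp [add_mul, mul_assoc, Finset.sum_add_distrib, Finset.mul_sum]
  rw [qAggregationCriterion_eq hsum, qAggregationCriterion_eq hθ, qAggregationCriterion_eq hθ',
    hmix, hlinear, norm_add_sq_real, norm_sub_sq_real, norm_smul, norm_smul, real_inner_smul_left,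
    real_inner_smul_right, mul_pow, mul_pow, Real.norm_eq_abs, Real.norm_eq_abs, sq_abs, sq_abs]
  ring

lemma qAggregationCriterion_add_le_of_isMinOn
    (hmin : IsMinOn (qAggregationCriterion m y a) (stdSimplex ℝ κ) θ) (hθ : θ ∈ stdSimplex ℝ κ)
    {θ' : κ → ℝ} (hθ' : θ' ∈ stdSimplex ℝ κ) :
    qAggregationCriterion m y a θ + ‖∑ j, θ j • m j - ∑ j, θ' j • m j‖ ^ 2 / 2 ≤
      qAggregationCriterion m y a θ' := by
  refine add_le_of_forall_le_segment fun t ht => ?_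
  rw [← qAggregationCriterion_segment hθ.2 hθ'.2]
  exact hmin (convex_stdSimplex ℝ κ hθ hθ' (by linarith [ht.2]) ht.1.le (by ring))

lemma qAggregationCriterion_single [DecidableEq κ] (k : κ) :
    qAggregationCriterion m y a (Pi.single k 1) = ‖m k‖ ^ 2 - 2 * ⟪y, m k⟫ + a k := by
  simp [qAggregationCriterion, Pi.single_apply, ite_smul]

theorem qAggregation_excess_risk_le {f ξ : E} (hθ : θ ∈ stdSimplex ℝ κ)
    (hmin : IsMinOn (qAggregationCriterion m (f + ξ) a) (stdSimplex ℝ κ) θ) (k : κ) :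
    ‖∑ j, θ j • m j - f‖ ^ 2 - ‖m k - f‖ ^ 2 ≤
      ∑ j, θ j * (2 * ⟪ξ, m j - m k⟫ - (a j - a k) - ‖m j - m k‖ ^ 2 / 2) := by
  classical
  have hgrowth := qAggregationCriterion_add_le_of_isMinOn hmin hθ (single_mem_stdSimplex ℝ k)
  have hterm (j : κ) : θ j * (2 * ⟪ξ, m j - m k⟫ - (a j - a k) - ‖m j - m k‖ ^ 2 / 2) =
      2 * ⟪ξ, θ j • m j⟫ - θ j * (2 * ⟪ξ, m k⟫) - (θ j * a j - θ j * a k) -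
        θ j * ‖m j - m k‖ ^ 2 / 2 := by
    rw [inner_sub_right, real_inner_smul_right]
    ring
  rw [qAggregationCriterion_single] at hgrowth
  simp only [qAggregationCriterion, Pi.single_apply, ite_smul, one_smul, zero_smul,
    Finset.sum_ite_eq', Finset.mem_univ, if_true, inner_add_left] at hgrowth
  simp only [hterm, Finset.sum_sub_distrib, ← Finset.mul_sum, ← Finset.sum_mul, ← Finset.sum_div,
    hθ.2, one_mul, ← inner_sum]
  rw [sum_mul_norm_sub_sq_eq_dispersion_add hθ.2, norm_sub_sq_real, norm_sub_sq_real (m k) f,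
    real_inner_comm f, real_inner_comm f]
  linarith

end QAggregation

section AffineAggregation

open scoped RealInnerProductSpace

variable {E : Type*} [NormedAddCommGroup E] [InnerProductSpace ℝ E] {κ : Type*}
  {A : κ → E →ₗ[ℝ] E} {b : κ → E} {f ξ : E} {σ β x : ℝ} {w : κ → ℝ}

lemma noiseExcess_affine_sub (j k : κ) :
    noiseExcess (A j - A k) ((A j - A k) f + (b j - b k)) σ ξ =
      2 * ⟪ξ, (A j (f + ξ) + b j) - (A k (f + ξ) + b k)⟫ -
        (2 * σ ^ 2 * LinearMap.trace ℝ E (A j) - 2 * σ ^ 2 * LinearMap.trace ℝ E (A k)) -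
        ‖(A j (f + ξ) + b j) - (A k (f + ξ) + b k)‖ ^ 2 / 2 := by
  have hdiff : (A j - A k) ξ + ((A j - A k) f + (b j - b k)) =
      (A j (f + ξ) + b j) - (A k (f + ξ) + b k) := by
    simp only [LinearMap.sub_apply, map_add]
    abel
  rw [noiseExcess, hdiff, map_sub]
  ring

variable [Fintype κ]

lemma affine_aggregation_risk_le {θ : κ → ℝ} (hθ : θ ∈ stdSimplex ℝ κ)
    (hmin : IsMinOn (qAggregationCriterion (fun j => A j (f + ξ) + b j) (f + ξ)
      fun j => 2 * σ ^ 2 * LinearMap.trace ℝ E (A j) + β * σ ^ 2 * w j) (stdSimplex ℝ κ) θ)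
    {k : κ} (hexcess : ∀ j, noiseExcess (A j - A k) ((A j - A k) f + (b j - b k)) σ ξ ≤
      β * σ ^ 2 * (x + (w j + w k))) :
    ‖∑ j, θ j • (A j (f + ξ) + b j) - f‖ ^ 2 ≤
      ‖A k (f + ξ) + b k - f‖ ^ 2 + 2 * β * σ ^ 2 * w k + β * σ ^ 2 * x := by
  have haverage : ‖∑ j, θ j • (A j (f + ξ) + b j) - f‖ ^ 2 - ‖A k (f + ξ) + b k - f‖ ^ 2 ≤
      ∑ j, θ j * (2 * β * σ ^ 2 * w k + β * σ ^ 2 * x) := by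
    refine (qAggregation_excess_risk_le hθ hmin k).trans
      (Finset.sum_le_sum fun j _ => mul_le_mul_of_nonneg_left ?_ (hθ.1 j))
    have hj := hexcess j
    rw [noiseExcess_affine_sub] at hj
    linarith
  rw [← Finset.sum_mul, hθ.2, one_mul] at haverage
  linarith

variable [FiniteDimensional ℝ E] [MeasurableSpace E] [BorelSpace E]

lemma isotropicGaussian_exists_noiseExcess_gt_le {ι : Type*} [Fintype ι] {B : ι → E →ₗ[ℝ] E}
    (hB : ∀ i z, ‖B i z‖ ≤ 2 * ‖z‖) (c : ι → E) (σ : ℝ) (hβ : 36 ≤ β) {s : ι → ℝ}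
    (hs : ∑ i, Real.exp (-s i) ≤ 1) (x : ℝ) :
    isotropicGaussian E σ {g | ∃ i, β * σ ^ 2 * (x + s i) < noiseExcess (B i) (c i) σ g} ≤
      ENNReal.ofReal (Real.exp (-x)) := by
  rw [Set.ofPred_exists]
  calc isotropicGaussian E σ (⋃ i, {g | β * σ ^ 2 * (x + s i) < noiseExcess (B i) (c i) σ g})
      ≤ ∑ i, ENNReal.ofReal (Real.exp (-(x + s i))) :=
        (measure_iUnion_fintype_le _ _).trans <| Finset.sum_le_sum fun i _ =>
          isotropicGaussian_noiseExcess_gt_le (hB i) (c i) σ hβ _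
    _ = ENNReal.ofReal (Real.exp (-x) * ∑ i, Real.exp (-s i)) := by
        simp only [neg_add, Real.exp_add, Finset.mul_sum]
        rw [ENNReal.ofReal_sum_of_nonneg fun i _ => by positivity]
    _ ≤ ENNReal.ofReal (Real.exp (-x)) :=
        ENNReal.ofReal_le_ofReal (mul_le_of_le_one_right (Real.exp_pos _).le hs)

lemma isotropicGaussian_exists_pair_noiseExcess_gt_le (hA : ∀ j z, ‖A j z‖ ≤ ‖z‖) (b : κ → E)
    (f : E) (σ : ℝ) (hβ : 36 ≤ β) (hw : ∑ j, Real.exp (-w j) ≤ 1) (x : ℝ) :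
    isotropicGaussian E σ {g | ∃ p : κ × κ, β * σ ^ 2 * (x + (w p.1 + w p.2)) <
        noiseExcess (A p.1 - A p.2) ((A p.1 - A p.2) f + (b p.1 - b p.2)) σ g} ≤
      ENNReal.ofReal (Real.exp (-x)) := by
  refine isotropicGaussian_exists_noiseExcess_gt_le (fun p z => ?_) _ σ hβ ?_ x
  · calc ‖A p.1 z - A p.2 z‖ ≤ ‖A p.1 z‖ + ‖A p.2 z‖ := norm_sub_le _ _
      _ ≤ 2 * ‖z‖ := by linarith [hA p.1 z, hA p.2 z]
  · calc ∑ p : κ × κ, Real.exp (-(w p.1 + w p.2))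
        = (∑ j, Real.exp (-w j)) * ∑ k, Real.exp (-w k) := by
          simp only [neg_add, Real.exp_add, Fintype.sum_prod_type, Finset.sum_mul_sum]
      _ ≤ 1 := mul_le_one₀ hw (by positivity) hw

theorem aggregation_with_prior_weights_general (f : E) (hA : ∀ j z, ‖A j z‖ ≤ ‖z‖) (b : κ → E)
    (σ : ℝ) (hβ : 36 ≤ β) (hw : ∑ j, Real.exp (-w j) ≤ 1)
    {Ω : Type*} [MeasurableSpace Ω] {P : Measure Ω} {ξ : Ω → E}
    (hξ : HasLaw ξ (isotropicGaussian E σ) P) {θhat : Ω → κ → ℝ}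
    (hθ : ∀ ω, θhat ω ∈ stdSimplex ℝ κ)
    (hmin : ∀ ω, IsMinOn (qAggregationCriterion (fun j => A j (f + ξ ω) + b j) (f + ξ ω)
      fun j => 2 * σ ^ 2 * LinearMap.trace ℝ E (A j) + β * σ ^ 2 * w j)
      (stdSimplex ℝ κ) (θhat ω)) (x : ℝ) :
    ENNReal.ofReal (1 - Real.exp (-x)) ≤
      P {ω | ∀ k, ‖∑ j, θhat ω j • (A j (f + ξ ω) + b j) - f‖ ^ 2 ≤
        ‖A k (f + ξ ω) + b k - f‖ ^ 2 + 2 * β * σ ^ 2 * w k + β * σ ^ 2 * x} := by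
  have hP : IsProbabilityMeasure P := hξ.isProbabilityMeasure
  let bad := {g : E | ∃ p : κ × κ, β * σ ^ 2 * (x + (w p.1 + w p.2)) <
    noiseExcess (A p.1 - A p.2) ((A p.1 - A p.2) f + (b p.1 - b p.2)) σ g}
  have hbad : P (ξ ⁻¹' bad) ≤ ENNReal.ofReal (Real.exp (-x)) :=
    calc P (ξ ⁻¹' bad) ≤ P.map ξ bad := Measure.le_map_apply hξ.aemeasurable bad
      _ ≤ ENNReal.ofReal (Real.exp (-x)) :=
          hξ.map_eq ▸ isotropicGaussian_exists_pair_noiseExcess_gt_le hA b f σ hβ hw x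
  have hgood : (ξ ⁻¹' bad)ᶜ ⊆ {ω | ∀ k, ‖∑ j, θhat ω j • (A j (f + ξ ω) + b j) - f‖ ^ 2 ≤
      ‖A k (f + ξ ω) + b k - f‖ ^ 2 + 2 * β * σ ^ 2 * w k + β * σ ^ 2 * x} := fun ω hω k =>
    affine_aggregation_risk_le (hθ ω) (hmin ω) fun j => not_lt.1 fun hlt => hω ⟨(j, k), hlt⟩
  calc ENNReal.ofReal (1 - Real.exp (-x)) = 1 - ENNReal.ofReal (Real.exp (-x)) := by
        rw [ENNReal.ofReal_sub _ (Real.exp_pos _).le, ENNReal.ofReal_one]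
    _ ≤ 1 - P (ξ ⁻¹' bad) := tsub_le_tsub_left hbad 1
    _ ≤ P (ξ ⁻¹' bad)ᶜ :=
        tsub_le_iff_left.2 (measure_univ (μ := P) ▸ measure_univ_le_add_compl (ξ ⁻¹' bad))
    _ ≤ _ := measure_mono hgood

end AffineAggregation

section Coordinates

open scoped RealInnerProductSpace

variable {n M : ℕ}

lemma sqNorm_eq_norm_sq (v : Fin n → ℝ) : sqNorm v = ‖WithLp.toLp 2 v‖ ^ 2 :=
  (EuclideanSpace.real_norm_sq_eq _).symm

lemma opNorm_eq_norm_toEuclideanCLM (A : Matrix (Fin n) (Fin n) ℝ) :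
    opNorm A = ‖Matrix.toEuclideanCLM (𝕜 := ℝ) A‖ := by
  rw [← ContinuousLinearMap.sSup_unitClosedBall_eq_norm, opNorm]
  congr 1
  ext c
  simp only [sqNorm_eq_norm_sq, Real.sqrt_sq (norm_nonneg _), sq_le_one_iff₀ (norm_nonneg _),
    Set.mem_image, mem_closedBall_zero_iff]
  constructor
  · rintro ⟨x, hx, rfl⟩
    exact ⟨WithLp.toLp 2 x, hx, by rw [Matrix.toEuclideanCLM_toLp]⟩
  · rintro ⟨x, hx, rfl⟩
    exact ⟨WithLp.ofLp x, hx, rfl⟩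

lemma norm_toLpLin_apply_le (A : Matrix (Fin n) (Fin n) ℝ) (x : EuclideanSpace ℝ (Fin n)) :
    ‖A.toLpLin 2 2 x‖ ≤ opNorm A * ‖x‖ := by
  rw [opNorm_eq_norm_toEuclideanCLM]
  exact (Matrix.toEuclideanCLM (𝕜 := ℝ) A).le_opNorm x

lemma trace_toLpLin (A : Matrix (Fin n) (Fin n) ℝ) :
    LinearMap.trace ℝ _ (A.toLpLin 2 2) = A.trace :=
  A.trace_toLin_eq (PiLp.basisFun 2 ℝ (Fin n))

lemma toLp_muV (A : Fin M → Matrix (Fin n) (Fin n) ℝ) (b : Fin M → Fin n → ℝ) (y : Fin n → ℝ)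
    (θ : Fin M → ℝ) :
    WithLp.toLp 2 (muV A b y θ) =
      ∑ j, θ j • ((A j).toLpLin 2 2 (WithLp.toLp 2 y) + WithLp.toLp 2 (b j)) := by
  simp [muV, WithLp.toLp_sum]

lemma Hpen_add_eq_qAggregationCriterion (A : Fin M → Matrix (Fin n) (Fin n) ℝ)
    (b : Fin M → Fin n → ℝ) (σ c : ℝ) (y : Fin n → ℝ) (w θ : Fin M → ℝ) :
    Hpen A b σ y θ + c * ∑ j, θ j * w j =
      qAggregationCriterion
        (fun j => (A j).toLpLin 2 2 (WithLp.toLp 2 y) + WithLp.toLp 2 (b j)) (WithLp.toLp 2 y)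
        (fun j => 2 * σ ^ 2 * LinearMap.trace ℝ _ ((A j).toLpLin 2 2) + c * w j) θ := by
  have hcost : ∑ j, θ j * (2 * σ ^ 2 * (A j).trace + c * w j) =
      2 * σ ^ 2 * ∑ j, θ j * (A j).trace + c * ∑ j, θ j * w j := by
    simp only [mul_add, Finset.sum_add_distrib, Finset.mul_sum, mul_left_comm]
  have hinner : ∑ i, y i * muV A b y θ i =
      ⟪WithLp.toLp 2 y, WithLp.toLp 2 (muV A b y θ)⟫ := by
    simp [PiLp.inner_apply, mul_comm]
  simp only [qAggregationCriterion, ← toLp_muV, trace_toLpLin, hcost]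
  simp only [Hpen, Cp, pen, hinner, sqNorm_eq_norm_sq, WithLp.toLp_sub, WithLp.toLp_add,
    Matrix.toLpLin_toLp, Matrix.toLin'_apply]
  ring

lemma gaussPi_map_toLp (n : ℕ) (σ : ℝ) :
    (gaussPi n σ).map (WithLp.toLp 2) = isotropicGaussian (EuclideanSpace ℝ (Fin n)) σ := by
  have hscale : gaussPi n σ = (stdGaussianPi (Fin n)).map (σ • ·) := by
    have hreal : gaussianReal 0 ⟨σ ^ 2, sq_nonneg σ⟩ = (gaussianReal 0 1).map (σ * ·) := by
      rw [gaussianReal_map_const_mul, mul_zero, mul_one]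
      rfl
    rw [gaussPi, hreal, ← Measure.pi_map_pi fun _ => by fun_prop]
    rfl
  rw [hscale, isotropicGaussian, ← map_pi_eq_stdGaussian, Measure.map_map (by fun_prop)
    (by fun_prop), Measure.map_map (by fun_prop) (by fun_prop)]
  rfl

end Coordinates

/-- **Theorem 5.1**: aggregation of affine estimators with prior weights. -/
theorem aggregation_with_prior_weights
    {n M : ℕ} (hM : 2 ≤ M) (σ : ℝ) (f : Fin n → ℝ)
    (A : Fin M → Matrix (Fin n) (Fin n) ℝ) (b : Fin M → Fin n → ℝ)
    (hop : ∀ j, opNorm (A j) ≤ 1)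
    (π : Fin M → ℝ) (hπ : π ∈ simplex M) (hπpos : ∀ j, 0 < π j)
    {Ω : Type} [MeasurableSpace Ω] (P : Measure Ω) [IsProbabilityMeasure P]
    (ξ : Ω → Fin n → ℝ) (hξ : Measurable ξ) (hlaw : P.map ξ = gaussPi n σ)
    (θhat : Ω → Fin M → ℝ)
    (hθmem : ∀ ω, θhat ω ∈ simplex M)
    (hθmin : ∀ ω, ∀ θ ∈ simplex M,
      Hpen A b σ (f + ξ ω) (θhat ω)
          + 46 * σ ^ 2 * ∑ j, θhat ω j * Real.log (1 / π j)
        ≤ Hpen A b σ (f + ξ ω) θ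
          + 46 * σ ^ 2 * ∑ j, θ j * Real.log (1 / π j)) :
    ∀ x : ℝ, 0 < x →
      ENNReal.ofReal (1 - 2 * Real.exp (-x)) ≤
        P {ω | ∀ j, sqNorm (muV A b (f + ξ ω) (θhat ω) - f) ≤
            sqNorm ((A j).mulVec (f + ξ ω) + b j - f)
              + 92 * σ ^ 2 * Real.log (1 / π j) + 46 * σ ^ 2 * x} := by
  intro x _
  have hcontraction (j : Fin M) (z : EuclideanSpace ℝ (Fin n)) : ‖(A j).toLpLin 2 2 z‖ ≤ ‖z‖ :=
    (norm_toLpLin_apply_le (A j) z).trans (mul_le_of_le_one_left (norm_nonneg z) (hop j))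
  have hweights : ∑ j, Real.exp (-Real.log (1 / π j)) ≤ 1 := by
    simp only [one_div, Real.log_inv, neg_neg, Real.exp_log (hπpos _), hπ.2, le_refl]
  have hnoise : HasLaw (fun ω => WithLp.toLp 2 (ξ ω))
      (isotropicGaussian (EuclideanSpace ℝ (Fin n)) σ) P :=
    ⟨by fun_prop, by rw [← gaussPi_map_toLp, ← hlaw, Measure.map_map (by fun_prop) hξ]; rfl⟩
  have hgeneral := aggregation_with_prior_weights_general (WithLp.toLp 2 f) hcontraction
    (fun j => WithLp.toLp 2 (b j)) σ (β := 46) (by norm_num) hweights hnoise hθmem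
    (fun ω θ hθ => by
      simpa only [Set.mem_ofPred_eq, ← WithLp.toLp_add, ← Hpen_add_eq_qAggregationCriterion]
        using hθmin ω θ hθ) x
  simp only [← WithLp.toLp_add, ← toLp_muV] at hgeneral
  simp only [Matrix.toLpLin_toLp, Matrix.toLin'_apply, ← WithLp.toLp_add, ← WithLp.toLp_sub,
    ← sqNorm_eq_norm_sq, show (2 : ℝ) * 46 = 92 by norm_num] at hgeneral
  exact (ENNReal.ofReal_le_ofReal (by linarith [Real.exp_pos (-x)])).trans hgeneral

end
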